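/- Let χ be a quadratic Dirichlet character modulo q induced by the primitive character χ* of conductor q₀. For x ∈ ℤ set r = gcd(q, x). If q/q₀ is square-free, gcd(q/q₀, q₀) = 1 and r ∣ q/q₀, then Σ_{a ∈ A_q} G(χ, a) e^{2πi x a/q} = μ(r) q₀ (φ(r)/φ(q)) χ*(−x); otherwise Σ_{a ∈ A_q} G(χ, a) e^{2πi x a/q} = 0. -/

import Mathlib

open scoped BigOperators

/-- `A_q = {1 ≤ a ≤ q : gcd(a, q) = 1}`. -/
def Aq (q : ℕ) : Finset ℕ := (Finset.Icc 1 q).filter (fun a => Nat.Coprime a q)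

/-- The normalized Gauss sum `G(χ, n) = (1/φ(q)) Σ_{r ∈ A_q} χ(r) e^{2πi r n/q}`. -/
noncomputable def gaussG (q : ℕ) (χ : DirichletCharacter ℂ q) (n : ℤ) : ℂ :=
  ((q.totient : ℂ))⁻¹ *
    ∑ r ∈ Aq q, χ (r : ZMod q) * Complex.exp (2 * Real.pi * Complex.I * r * n / q)

/-!
Let `τ` denote the Gauss sum at the standard additive character. For `a` prime to `q` one has
`G(χ, a) = φ(q)⁻¹ χ⁻¹(a) τ(χ)`, so for every character `χ` the sum in question is `φ(q)⁻¹ τ(χ)`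
times the Gauss sum of `χ⁻¹` at frequency `x`. Write `q = q₀ m`. Expanding
`χ(b) = ∑_{d ∣ m, d ∣ b} μ(d) χ*(b)` expresses a Gauss sum of `χ` through those of `χ*`: at
frequency `1` it equals `μ(m) χ*(m) τ(χ*)`, which vanishes unless `m` is square-free and prime to
`q₀`, and in that case frequency `x` contributes a Ramanujan sum `c_m(x)`. Finally
`τ(χ*) τ(χ*⁻¹) = q₀ χ*(-1)`, and the Möbius factors combine to `μ(gcd(m, x))`.
-/

open ArithmeticFunction Finset ZMod

section FiniteSums

variable {M : Type*} [AddCommMonoid M]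

lemma sum_range_mul (m k : ℕ) (F : ℕ → M) :
    ∑ b ∈ range (m * k), F b = ∑ j ∈ range k, ∑ c ∈ range m, F (c + m * j) := by
  induction k with
  | zero => simp
  | succ k ih =>
    rw [Nat.mul_succ, sum_range_add, ih, sum_range_succ]
    simp only [add_comm]

lemma sum_range_filter_dvd {d n : ℕ} (hd : d ≠ 0) (hdn : d ∣ n) (F : ℕ → M) :
    ∑ b ∈ range n with d ∣ b, F b = ∑ c ∈ range (n / d), F (d * c) := by
  have hfilter : {b ∈ range n | d ∣ b} = (range (n / d)).image (d * ·) := by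
    obtain ⟨l, rfl⟩ := hdn
    ext b
    simp only [mem_filter, mem_range, mem_image, Nat.mul_div_cancel_left l (Nat.pos_of_ne_zero hd)]
    constructor
    · rintro ⟨hlt, c, rfl⟩
      exact ⟨c, Nat.lt_of_mul_lt_mul_left hlt, rfl⟩
    · rintro ⟨c, hc, rfl⟩
      exact ⟨Nat.mul_lt_mul_of_pos_left hc (Nat.pos_of_ne_zero hd), dvd_mul_right d c⟩
  rw [hfilter, sum_image fun a _ b _ h ↦ Nat.eq_of_mul_eq_mul_left (Nat.pos_of_ne_zero hd) h]

lemma sum_range_natCast_zmod {N : ℕ} [NeZero N] (f : ZMod N → M) :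
    ∑ b ∈ range N, f b = ∑ a, f a := by
  refine sum_bij' (fun b _ ↦ (b : ZMod N)) (fun a _ ↦ a.val) ?_ ?_ ?_ ?_ ?_
  · simp
  · simpa using fun a ↦ val_lt a
  · intro b hb
    exact val_cast_of_lt (mem_range.mp hb)
  · simp
  · simp

lemma sum_Aq_eq_sum_zmod {q : ℕ} [NeZero q] {f : ZMod q → M} (hf : ∀ a, ¬IsUnit a → f a = 0) :
    ∑ a ∈ Aq q, f a = ∑ a, f a := by
  calc ∑ a ∈ Aq q, f a
      = ∑ a ∈ Icc 1 q, f a := sum_filter_of_ne fun a _ ha ↦ by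
        contrapose! ha
        exact hf a (by rwa [isUnit_iff_coprime])
    _ = ∑ b ∈ range q, f ((b : ZMod q) + 1) := by
        rw [← Ico_add_one_right_eq_Icc, sum_Ico_eq_sum_range]
        simp [add_comm]
    _ = ∑ a, f (a + 1) := sum_range_natCast_zmod fun a ↦ f (a + 1)
    _ = ∑ a, f a := Fintype.sum_equiv (Equiv.addRight 1) _ _ fun _ ↦ rfl

end FiniteSums

section Moebius

lemma divisors_filter_intCast_dvd {m : ℕ} (hm : m ≠ 0) (x : ℤ) :
    m.divisors.filter (fun k : ℕ ↦ (k : ℤ) ∣ x) = (Int.gcd m x).divisors := by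
  ext k
  simp [Int.dvd_gcd_iff, hm, Int.natCast_dvd]

lemma sum_moebius_filter_intCast_dvd {m : ℕ} (hm : m ≠ 0) (x : ℤ) :
    ∑ d ∈ m.divisors.filter (fun d : ℕ ↦ (d : ℤ) ∣ x), moebius d =
      if IsCoprime (m : ℤ) x then 1 else 0 := by
  rw [divisors_filter_intCast_dvd hm, ← coe_mul_zeta_apply, moebius_mul_coe_zeta, one_apply]
  simp only [Int.isCoprime_iff_gcd_eq_one]

lemma sum_divisors_mul_moebius_div (n : ℕ) :
    ∑ k ∈ n.divisors, (k : ℤ) * moebius (n / k) = n.totient := by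
  rcases n.eq_zero_or_pos with rfl | hn
  · simp
  have hinv := (sum_eq_iff_sum_mul_moebius_eq (R := ℤ) (f := fun n ↦ (n.totient : ℤ))
    (g := fun n ↦ (n : ℤ))).mp (fun n _ ↦ mod_cast n.sum_totient) n hn
  simp only [Int.cast_id] at hinv
  rw [← hinv, Nat.sum_divisorsAntidiagonal' fun d k ↦ moebius d * (k : ℤ)]
  exact sum_congr rfl fun k _ ↦ mul_comm _ _

lemma moebius_mul_of_squarefree {a b : ℕ} (h : Squarefree (a * b)) :
    moebius (a * b) = moebius a * moebius b :=
  isMultiplicative_moebius.map_mul_of_coprime (Nat.coprime_of_squarefree_mul h)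

/- For `g = gcd(m, x)` the left-hand side is the Ramanujan sum `c_m(x)`. -/
lemma sum_divisors_mul_moebius_div_of_squarefree {m g : ℕ} (hm : Squarefree m) (hg : g ∣ m) :
    ∑ k ∈ g.divisors, (k : ℤ) * moebius (m / k) = moebius (m / g) * g.totient := by
  obtain ⟨t, rfl⟩ := hg
  have hg0 : g ≠ 0 := left_ne_zero_of_mul hm.ne_zero
  rw [← sum_divisors_mul_moebius_div g, Nat.mul_div_cancel_left t (Nat.pos_of_ne_zero hg0),
    mul_sum]
  refine sum_congr rfl fun k hk ↦ ?_
  have hkg := Nat.dvd_of_mem_divisors hk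
  have hdvd : g / k * t ∣ g * t := mul_dvd_mul_right (Nat.div_dvd_of_dvd hkg) t
  rw [Nat.mul_comm g t, Nat.mul_div_assoc t hkg, Nat.mul_comm t,
    moebius_mul_of_squarefree (hm.squarefree_of_dvd hdvd)]
  ring

lemma moebius_mul_moebius_div_of_squarefree {m g : ℕ} (hm : Squarefree m) (hg : g ∣ m) :
    moebius m * moebius (m / g) = moebius g := by
  obtain ⟨t, rfl⟩ := hg
  have hg0 : g ≠ 0 := left_ne_zero_of_mul hm.ne_zero
  have ht : moebius t ^ 2 = 1 :=
    moebius_sq_eq_one_of_squarefree (hm.squarefree_of_dvd (dvd_mul_left t g))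
  rw [Nat.mul_div_cancel_left t (Nat.pos_of_ne_zero hg0), moebius_mul_of_squarefree hm]
  linear_combination moebius g * ht

end Moebius

section AdditiveCharacter

lemma stdAddChar_intCast_mul {d M N : ℕ} [NeZero M] [NeZero N] (h : d * N = M) (n : ℤ) :
    stdAddChar ((d * n : ℤ) : ZMod M) = stdAddChar (n : ZMod N) := by
  subst h
  have hd : (d : ℂ) ≠ 0 := mod_cast left_ne_zero_of_mul (NeZero.ne (d * N))
  rw [stdAddChar_coe, stdAddChar_coe]
  congr 1
  push_cast
  field_simp

lemma sum_range_stdAddChar_intCast_mul (k : ℕ) [NeZero k] (x : ℤ) :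
    ∑ j ∈ range k, stdAddChar ((x * j : ℤ) : ZMod k) = if (k : ℤ) ∣ x then (k : ℂ) else 0 := by
  have horth := AddChar.sum_mulShift (x : ZMod k) (isPrimitive_stdAddChar k)
  rw [← sum_range_natCast_zmod, ZMod.card] at horth
  simpa [mul_comm, intCast_zmod_eq_zero_iff_dvd] using horth

lemma sum_range_mul_stdAddChar {N k : ℕ} [NeZero N] [NeZero k] (f : ZMod N → ℂ) (x : ℤ) :
    ∑ b ∈ range (N * k), f b * stdAddChar ((x * b : ℤ) : ZMod (N * k)) =
      if (k : ℤ) ∣ x then k * ∑ a, f a * stdAddChar (((x / k : ℤ) : ZMod N) * a) else 0 := by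
  have hshift (j c : ℕ) : f ((c + N * j : ℕ) : ZMod N) *
      stdAddChar ((x * (c + N * j : ℕ) : ℤ) : ZMod (N * k)) =
      f c * stdAddChar ((x * c : ℤ) : ZMod (N * k)) * stdAddChar ((x * j : ℤ) : ZMod k) := by
    have hsplit : x * (c + N * j : ℕ) = x * c + N * (x * j) := by push_cast; ring
    rw [hsplit, Int.cast_add, AddChar.map_add_eq_mul, stdAddChar_intCast_mul rfl]
    simp [mul_assoc]
  simp_rw [sum_range_mul, hshift, ← sum_mul, ← mul_sum, sum_range_stdAddChar_intCast_mul]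
  split_ifs with hkx
  · obtain ⟨y, rfl⟩ := hkx
    rw [Int.mul_ediv_cancel_left y (mod_cast NeZero.ne k), mul_comm, ← sum_range_natCast_zmod]
    refine congrArg _ (sum_congr rfl fun c _ ↦ ?_)
    rw [mul_assoc, stdAddChar_intCast_mul (mul_comm k N)]
    push_cast
    rfl
  · exact mul_zero _

end AdditiveCharacter

section GaussSum

lemma mulChar_apply_mul_inv_apply {R S : Type*} [CommMonoid R] [CommMonoidWithZero S]
    (χ : MulChar R S) {a : R} (ha : IsUnit a) : χ a * χ⁻¹ a = 1 := by
  rw [← MulChar.mul_apply, mul_inv_cancel, MulChar.one_apply ha]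

lemma changeLevel_intCast {R : Type*} [CommMonoidWithZero R] [Nontrivial R] {N m : ℕ}
    (χ : DirichletCharacter R N) (b : ℤ) :
    DirichletCharacter.changeLevel (dvd_mul_right N m) χ (b : ZMod (N * m)) =
      if IsCoprime (m : ℤ) b then χ b else 0 := by
  have hiff : IsCoprime b (N * m : ℕ) ↔ IsCoprime b N ∧ IsCoprime (m : ℤ) b := by
    rw [Nat.cast_mul, IsCoprime.mul_right_iff, isCoprime_comm (x := (m : ℤ))]
  by_cases hb : IsCoprime b (N * m : ℕ)
  · rw [DirichletCharacter.changeLevel_eq_cast_of_dvd' χ _ hb, if_pos (hiff.mp hb).2]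
  · rw [(DirichletCharacter.apply_eq_zero_iff _ _).mpr hb]
    split_ifs with hm
    · exact ((DirichletCharacter.apply_eq_zero_iff _ _).mpr fun hN ↦ hb (hiff.mpr ⟨hN, hm⟩)).symm
    · rfl

lemma changeLevel_natCast_eq_sum_moebius {R : Type*} [CommRing R] [Nontrivial R] {N m : ℕ}
    (hm : m ≠ 0) (χ : DirichletCharacter R N) (b : ℕ) :
    DirichletCharacter.changeLevel (dvd_mul_right N m) χ b =
      ∑ d ∈ m.divisors, if d ∣ b then (moebius d : R) * χ b else 0 := by
  have hb := changeLevel_intCast (m := m) χ b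
  have hind : (if IsCoprime (m : ℤ) b then χ (b : ℤ) else 0) =
      ((if IsCoprime (m : ℤ) b then 1 else 0 : ℤ) : R) * χ b := by split_ifs <;> simp
  rw [hind, ← sum_moebius_filter_intCast_dvd hm, Int.cast_sum, sum_mul, sum_filter] at hb
  simpa [Int.natCast_dvd_natCast] using hb

variable {N : ℕ} [NeZero N]

lemma gaussSum_stdAddChar_mulShift_eq_sum_range (χ : DirichletCharacter ℂ N) (x : ℤ) :
    gaussSum χ (stdAddChar.mulShift (x : ZMod N)) =
      ∑ b ∈ range N, χ b * stdAddChar ((x * b : ℤ) : ZMod N) := by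
  simp [gaussSum, AddChar.mulShift_apply, ← sum_range_natCast_zmod]

lemma sum_range_filter_dvd_mul_stdAddChar {m d : ℕ} [NeZero m] (hd : d ∣ m)
    (χ : DirichletCharacter ℂ N) (x : ℤ) :
    ∑ b ∈ range (N * m) with d ∣ b, χ b * stdAddChar ((x * b : ℤ) : ZMod (N * m)) =
      if ((m / d : ℕ) : ℤ) ∣ x then
        χ d * ((m / d : ℕ) * gaussSum χ (stdAddChar.mulShift ((x / (m / d : ℕ) : ℤ) : ZMod N)))
      else 0 := by
  obtain ⟨k, rfl⟩ := hd
  have hd0 : d ≠ 0 := left_ne_zero_of_mul (NeZero.ne (d * k))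
  have : NeZero k := ⟨right_ne_zero_of_mul (NeZero.ne (d * k))⟩
  have hterm (c : ℕ) :
      χ (d * c : ℕ) * stdAddChar ((x * (d * c : ℕ) : ℤ) : ZMod (N * (d * k))) =
        χ d * (χ c * stdAddChar ((x * c : ℤ) : ZMod (N * k))) := by
    have hcomm : x * (d * c : ℕ) = d * (x * c) := by push_cast; ring
    rw [hcomm, stdAddChar_intCast_mul (Nat.mul_left_comm d N k), Nat.cast_mul, map_mul, mul_assoc]
  rw [sum_range_filter_dvd hd0 ((dvd_mul_right d k).mul_left N),
    Nat.mul_div_assoc N (dvd_mul_right d k), Nat.mul_div_cancel_left k (Nat.pos_of_ne_zero hd0)]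
  simp_rw [hterm, ← mul_sum, sum_range_mul_stdAddChar, mul_ite, mul_zero]
  rfl

theorem gaussSum_changeLevel {m : ℕ} [NeZero m] (χ : DirichletCharacter ℂ N) (x : ℤ) :
    gaussSum (DirichletCharacter.changeLevel (dvd_mul_right N m) χ)
        (stdAddChar.mulShift (x : ZMod (N * m))) =
      ∑ k ∈ (Int.gcd m x).divisors, k * moebius (m / k) * χ (m / k : ℕ) *
        gaussSum χ (stdAddChar.mulShift ((x / k : ℤ) : ZMod N)) := by
  have hm : m ≠ 0 := NeZero.ne m
  calc _ = ∑ d ∈ m.divisors, moebius d *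
        ∑ b ∈ range (N * m) with d ∣ b, χ b * stdAddChar ((x * b : ℤ) : ZMod (N * m)) := by
        rw [gaussSum_stdAddChar_mulShift_eq_sum_range]
        simp_rw [changeLevel_natCast_eq_sum_moebius hm, sum_mul, mul_sum, sum_filter]
        rw [sum_comm]
        simp only [ite_mul, zero_mul, mul_assoc]
    _ = ∑ d ∈ m.divisors, if ((m / d : ℕ) : ℤ) ∣ x then
          (m / d : ℕ) * moebius (m / (m / d)) * χ (m / (m / d) : ℕ) *
            gaussSum χ (stdAddChar.mulShift ((x / (m / d : ℕ) : ℤ) : ZMod N)) else 0 := by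
        refine sum_congr rfl fun d hd ↦ ?_
        have hdm := Nat.dvd_of_mem_divisors hd
        rw [sum_range_filter_dvd_mul_stdAddChar hdm, Nat.div_div_self hdm hm]
        split_ifs <;> ring
    _ = _ := by
        rw [Nat.sum_div_divisors m fun k ↦ if (k : ℤ) ∣ x then k * moebius (m / k) *
          χ (m / k : ℕ) * gaussSum χ (stdAddChar.mulShift ((x / k : ℤ) : ZMod N)) else 0,
          ← sum_filter, divisors_filter_intCast_dvd hm]

theorem gaussSum_changeLevel_stdAddChar {m : ℕ} [NeZero m] (χ : DirichletCharacter ℂ N) :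
    gaussSum (DirichletCharacter.changeLevel (dvd_mul_right N m) χ) stdAddChar =
      moebius m * χ m * gaussSum χ stdAddChar := by
  simpa using gaussSum_changeLevel (m := m) χ 1

lemma gaussSum_changeLevel_stdAddChar_eq_zero {m : ℕ} [NeZero m] (χ : DirichletCharacter ℂ N)
    (h : ¬(Squarefree m ∧ m.Coprime N)) :
    gaussSum (DirichletCharacter.changeLevel (dvd_mul_right N m) χ) stdAddChar = 0 := by
  rw [gaussSum_changeLevel_stdAddChar]
  rcases not_and_or.mp h with hsq | hco
  · simp [moebius_eq_zero_of_not_squarefree hsq]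
  · simp [MulChar.map_nonunit χ ((isUnit_iff_coprime m N).not.mpr hco)]

theorem gaussSum_changeLevel_of_coprime {m : ℕ} [NeZero m] {χ : DirichletCharacter ℂ N}
    (hχ : χ.IsPrimitive) (hm : m.Coprime N) (x : ℤ) :
    gaussSum (DirichletCharacter.changeLevel (dvd_mul_right N m) χ)
        (stdAddChar.mulShift (x : ZMod (N * m))) =
      χ m * χ⁻¹ x * gaussSum χ stdAddChar *
        ((∑ k ∈ (Int.gcd m x).divisors, (k : ℤ) * moebius (m / k) : ℤ) : ℂ) := by
  rw [gaussSum_changeLevel, Int.cast_sum, mul_sum]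
  refine sum_congr rfl fun k hk ↦ ?_
  have hkg : (k : ℤ) ∣ Int.gcd m x := mod_cast Nat.dvd_of_mem_divisors hk
  obtain ⟨y, hy⟩ := hkg.trans (Int.gcd_dvd_right ..)
  obtain ⟨l, rfl⟩ : k ∣ m := mod_cast hkg.trans (Int.gcd_dvd_left ..)
  have hk0 : k ≠ 0 := left_ne_zero_of_mul (NeZero.ne (k * l))
  have hunit : IsUnit (k : ZMod N) := (isUnit_iff_coprime k N).mpr hm.coprime_mul_right
  rw [gaussSum_mulShift_of_isPrimitive _ hχ, hy, Int.mul_ediv_cancel_left y (mod_cast hk0),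
    Nat.mul_div_cancel_left l (Nat.pos_of_ne_zero hk0)]
  push_cast
  simp only [map_mul]
  linear_combination -(k * moebius l * χ l * χ⁻¹ y * gaussSum χ stdAddChar) *
    mulChar_apply_mul_inv_apply χ hunit

theorem gaussSum_mul_gaussSum_inv_of_isPrimitive {χ : DirichletCharacter ℂ N}
    (hχ : χ.IsPrimitive) :
    gaussSum χ stdAddChar * gaussSum χ⁻¹ stdAddChar = N * χ (-1) := by
  have hinv : χ⁻¹.IsPrimitive := (DirichletCharacter.conductor_inv χ).trans hχ
  have hdft : dft χ = fun k ↦ χ⁻¹ (-1) * gaussSum χ stdAddChar * χ⁻¹ k := by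
    ext k
    rw [hχ.fourierTransform_eq_inv_mul_gaussSum, ← neg_one_mul k, map_mul]
    ring
  have hdft_dft := congrFun (dft_dft χ) (-1)
  rw [hdft, dft_const_mul] at hdft_dft
  simp only [hinv.fourierTransform_eq_inv_mul_gaussSum, inv_inv, neg_neg, map_one,
    mul_one, smul_eq_mul] at hdft_dft
  linear_combination χ (-1) * hdft_dft -
    gaussSum χ stdAddChar * gaussSum χ⁻¹ stdAddChar *
      mulChar_apply_mul_inv_apply χ isUnit_one.neg

theorem gaussSum_changeLevel_mul_gaussSum_changeLevel_inv {m : ℕ} [NeZero m]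
    {χ : DirichletCharacter ℂ N} (hχ : χ.IsPrimitive) (hsq : Squarefree m) (hco : m.Coprime N)
    (x : ℤ) :
    gaussSum (DirichletCharacter.changeLevel (dvd_mul_right N m) χ) stdAddChar *
        gaussSum (DirichletCharacter.changeLevel (dvd_mul_right N m) χ⁻¹)
          (stdAddChar.mulShift (x : ZMod (N * m))) =
      moebius (Int.gcd m x) * N * (Int.gcd m x).totient * χ ((-x : ℤ) : ZMod N) := by
  have hgm : Int.gcd m x ∣ m := mod_cast Int.gcd_dvd_left (m : ℤ) x
  have hinv : χ⁻¹.IsPrimitive := (DirichletCharacter.conductor_inv χ).trans hχ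
  have hcancel : χ m * χ⁻¹ m = 1 :=
    mulChar_apply_mul_inv_apply χ ((isUnit_iff_coprime m N).mpr hco)
  have hneg : χ ((-x : ℤ) : ZMod N) = χ (-1) * χ x := by rw [← map_mul]; simp
  have hmoebius : (moebius m : ℂ) * moebius (m / Int.gcd m x) = moebius (Int.gcd m x) :=
    mod_cast moebius_mul_moebius_div_of_squarefree hsq hgm
  rw [gaussSum_changeLevel_stdAddChar, gaussSum_changeLevel_of_coprime hinv hco, inv_inv,
    sum_divisors_mul_moebius_div_of_squarefree hsq hgm, hneg, ← hmoebius]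
  push_cast
  set g := Int.gcd m x
  calc _ = moebius m * moebius (m / g) * (χ m * χ⁻¹ m) *
        (gaussSum χ stdAddChar * gaussSum χ⁻¹ stdAddChar) * g.totient * χ x := by ring
    _ = _ := by rw [hcancel, gaussSum_mul_gaussSum_inv_of_isPrimitive hχ]; ring

end GaussSum

section Gcd

variable {a m : ℕ} {x : ℤ}

lemma gcd_mul_eq_of_gcd_mul_dvd (h : Int.gcd (a * m : ℕ) x ∣ m) :
    Int.gcd (a * m : ℕ) x = Int.gcd m x :=
  Nat.dvd_antisymm (Int.dvd_gcd (mod_cast h) (Int.gcd_dvd_right ..))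
    (Nat.gcd_dvd_gcd_mul_left_left ..)

lemma gcd_mul_dvd_of_isCoprime (h : IsCoprime x a) : Int.gcd (a * m : ℕ) x ∣ m :=
  (Nat.isCoprime_iff_coprime.mp
    (h.of_isCoprime_of_dvd_left (Int.gcd_dvd_right ..))).dvd_of_dvd_mul_left
    (mod_cast Int.gcd_dvd_left ((a * m : ℕ) : ℤ) x)

end Gcd

section NormalizedGaussSum

variable {q : ℕ} [NeZero q]

lemma sum_Aq_mul_exp (χ : DirichletCharacter ℂ q) (x : ℤ) :
    ∑ a ∈ Aq q, χ a * Complex.exp (2 * Real.pi * Complex.I * x * a / q) =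
      gaussSum χ (stdAddChar.mulShift (x : ZMod q)) := by
  rw [gaussSum, ← sum_Aq_eq_sum_zmod fun a ha ↦ by rw [MulChar.map_nonunit χ ha, zero_mul]]
  refine sum_congr rfl fun a _ ↦ ?_
  have hcast : (x : ZMod q) * a = ((x * a : ℤ) : ZMod q) := by push_cast; rfl
  rw [AddChar.mulShift_apply, hcast, stdAddChar_coe]
  push_cast
  simp only [mul_assoc]

lemma gaussG_eq_gaussSum (χ : DirichletCharacter ℂ q) (n : ℤ) :
    gaussG q χ n = (q.totient : ℂ)⁻¹ * gaussSum χ (stdAddChar.mulShift (n : ZMod q)) := by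
  simp_rw [gaussG, ← sum_Aq_mul_exp, mul_right_comm _ (_ : ℂ) (n : ℂ)]

theorem sum_Aq_gaussG_mul_exp (χ : DirichletCharacter ℂ q) (x : ℤ) :
    ∑ a ∈ Aq q, gaussG q χ (a : ℤ) * Complex.exp (2 * Real.pi * Complex.I * x * a / q) =
      (q.totient : ℂ)⁻¹ *
        (gaussSum χ stdAddChar * gaussSum χ⁻¹ (stdAddChar.mulShift (x : ZMod q))) := by
  rw [← sum_Aq_mul_exp, mul_sum, mul_sum]
  refine sum_congr rfl fun a ha ↦ ?_
  have hunit : IsUnit (a : ZMod q) := (isUnit_iff_coprime a q).mpr (mem_filter.mp ha).2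
  have hshift := gaussSum_mulShift_eq χ stdAddChar hunit.unit
  rw [hunit.unit_spec] at hshift
  rw [gaussG_eq_gaussSum, Int.cast_natCast, hshift]
  ring

end NormalizedGaussSum

theorem stmt_7_general (q q₀ : ℕ) (hq : 0 < q) (hdvd : q₀ ∣ q)
    (χ : DirichletCharacter ℂ q) (χstar : DirichletCharacter ℂ q₀)
    (hprim : χstar.IsPrimitive) (hind : χ = DirichletCharacter.changeLevel hdvd χstar)
    (x : ℤ) (r : ℕ) (hr : r = Int.gcd (q : ℤ) x) :
    (Squarefree (q / q₀) ∧ Nat.Coprime (q / q₀) q₀ ∧ r ∣ q / q₀ →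
      ∑ a ∈ Aq q, gaussG q χ (a : ℤ) * Complex.exp (2 * Real.pi * Complex.I * x * a / q) =
        ((ArithmeticFunction.moebius r : ℤ) : ℂ) * (q₀ : ℂ) *
          ((r.totient : ℂ) / (q.totient : ℂ)) * χstar (((-x : ℤ) : ZMod q₀))) ∧
    (¬(Squarefree (q / q₀) ∧ Nat.Coprime (q / q₀) q₀ ∧ r ∣ q / q₀) →
      ∑ a ∈ Aq q, gaussG q χ (a : ℤ) * Complex.exp (2 * Real.pi * Complex.I * x * a / q)
        = 0) := by
  obtain ⟨m, rfl⟩ := hdvd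
  have : NeZero q₀ := ⟨left_ne_zero_of_mul hq.ne'⟩
  have : NeZero m := ⟨right_ne_zero_of_mul hq.ne'⟩
  rw [sum_Aq_gaussG_mul_exp, hind, ← map_inv, Nat.mul_div_cancel_left m (NeZero.pos q₀)]
  subst hr
  constructor
  · rintro ⟨hsq, hco, hrm⟩
    rw [gaussSum_changeLevel_mul_gaussSum_changeLevel_inv hprim hsq hco,
      gcd_mul_eq_of_gcd_mul_dvd hrm]
    ring
  · intro hcond
    by_cases hm : Squarefree m ∧ m.Coprime q₀
    · have hx : χstar ((-x : ℤ) : ZMod q₀) = 0 :=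
        (DirichletCharacter.apply_eq_zero_iff _ _).mpr fun hx ↦
          hcond ⟨hm.1, hm.2, gcd_mul_dvd_of_isCoprime (IsCoprime.neg_left_iff _ _ |>.mp hx)⟩
      rw [gaussSum_changeLevel_mul_gaussSum_changeLevel_inv hprim hm.1 hm.2, hx]
      simp
    · rw [gaussSum_changeLevel_stdAddChar_eq_zero χstar hm]
      simp

/-- Evaluation of `Σ_{a ∈ A_q} G(χ, a) e^{2πi x a/q}` for a quadratic character `χ` mod `q`
induced by a primitive character `χ*` of conductor `q₀`, with `r = gcd(q, x)`. -/
theorem stmt_7 (q q₀ : ℕ) (hq : 0 < q) (hdvd : q₀ ∣ q)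
    (χ : DirichletCharacter ℂ q) (χstar : DirichletCharacter ℂ q₀)
    (hprim : χstar.IsPrimitive) (hind : χ = DirichletCharacter.changeLevel hdvd χstar)
    (hquad : ∀ n : ZMod q, χ n = -1 ∨ χ n = 0 ∨ χ n = 1) (hneg : ∃ n : ZMod q, χ n = -1)
    (x : ℤ) (r : ℕ) (hr : r = Int.gcd (q : ℤ) x) :
    (Squarefree (q / q₀) ∧ Nat.Coprime (q / q₀) q₀ ∧ r ∣ q / q₀ →
      ∑ a ∈ Aq q, gaussG q χ (a : ℤ) * Complex.exp (2 * Real.pi * Complex.I * x * a / q) =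
        ((ArithmeticFunction.moebius r : ℤ) : ℂ) * (q₀ : ℂ) *
          ((r.totient : ℂ) / (q.totient : ℂ)) * χstar (((-x : ℤ) : ZMod q₀))) ∧
    (¬(Squarefree (q / q₀) ∧ Nat.Coprime (q / q₀) q₀ ∧ r ∣ q / q₀) →
      ∑ a ∈ Aq q, gaussG q χ (a : ℤ) * Complex.exp (2 * Real.pi * Complex.I * x * a / q)
        = 0) :=
  stmt_7_general q q₀ hq hdvd χ χstar hprim hind x r hr
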